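/- arXiv:1101.3688 — 2 statements merged into one kernel-verified Lean document; each statement's English description precedes it below -/
import Mathlib

section
/- Let m ≥ 2 be an integer. For 0 ≤ z < 1, ₂F₁(-1/(2m), 1/2 - 1/(2m); 1 - 1/m; 1-z) = ((1+√z)/2)^{1/m}. -/
/-!
Put `a = -1/(2m)`, so that the claim is the quadratic identity
`₂F₁(a, a + 1/2; 2a + 1; x) = ((1 + √(1 - x)) / 2) ^ (-2a)` with `-1/2 < a < 0`.

Let `G` be the hypergeometric series and substitute `x = 4y(1 - y)`, i.e. `y = (1 - √(1 - x)) / 2`.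
The hypergeometric equation for `G` (`coeff_ode`) turns into an equation for `g(y) = G(4y(1 - y))`
on `[0, 1/2)` which factors: the function `h = (1 - y) g' - 2a g` satisfies `y h' = -(2a + 1) h`.
Hence `y ^ (2a + 1) h` is constant, and it vanishes at `0` because `2a + 1 > 0`; so `h = 0`.
Therefore `g / (1 - y) ^ (-2a)` has zero derivative and equals its value `1` at `0`
(`coeff_sum_quadratic`).

The endpoint `x = 1` follows by continuity. All coefficients of `G` beyond the constant one are
nonpositive and `G ≥ 0` on `[0, 1)`, which bounds the partial sums of their absolute values
(`coeff_summable`), so the series converges uniformly on `[0, 1]`.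
-/

/-- The Gauss hypergeometric series `₂F₁(A,B;C;x) = Σ_p (A)_p (B)_p / ((C)_p p!) x^p`. -/
noncomputable def hyp2F1 (A B C x : ℝ) : ℝ :=
  ∑' p : ℕ, ((ascPochhammer ℝ p).eval A * (ascPochhammer ℝ p).eval B
    / ((ascPochhammer ℝ p).eval C * (Nat.factorial p))) * x ^ p

/-! ### Coefficients of the series -/

/-- The coefficient of `x ^ n` in `₂F₁(a, a + 1/2; 2a + 1; x)`. -/
noncomputable def coeff (a : ℝ) (n : ℕ) : ℝ :=
  (ascPochhammer ℝ n).eval a * (ascPochhammer ℝ n).eval (a + 1 / 2)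
    / ((ascPochhammer ℝ n).eval (2 * a + 1) * (Nat.factorial n))

lemma coeff_zero (a : ℝ) : coeff a 0 = 1 := by
  simp [coeff]

lemma coeff_succ {a : ℝ} (ha : -(1 / 2) < a) (n : ℕ) :
    coeff a (n + 1) * ((2 * a + 1 + n) * (n + 1)) = coeff a n * ((a + n) * (a + 1 / 2 + n)) := by
  have h1 := (ascPochhammer_pos n (2 * a + 1) (by linarith)).ne'
  have h2 : (0 : ℝ) < Nat.factorial n := by positivity
  have h3 : (0 : ℝ) < 2 * a + 1 + n := by
    have : (0 : ℝ) ≤ n := n.cast_nonneg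
    linarith
  have h4 : (0 : ℝ) < (n : ℝ) + 1 := by positivity
  simp only [coeff, ascPochhammer_succ_eval, Nat.factorial_succ]
  push_cast
  generalize (ascPochhammer ℝ n).eval (2 * a + 1) = P at h1 ⊢
  generalize (2 * a + 1 + (n : ℝ)) = Q at h3 ⊢
  field_simp

/-- The ratio of consecutive coefficients is at most `1` in absolute value, since
`|a + n| ≤ n + 1` and `a + 1/2 ≤ 2a + 1`. -/
lemma coeff_abs_le {a : ℝ} (ha : -(1 / 2) < a) (ha0 : a < 0) (n : ℕ) : |coeff a n| ≤ 1 := by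
  induction n with
  | zero => simp [coeff_zero]
  | succ n ih =>
    have hn : (0 : ℝ) ≤ n := n.cast_nonneg
    have h := congrArg abs (coeff_succ ha n)
    have hp : 0 < (2 * a + 1 + n) * ((n : ℝ) + 1) := mul_pos (by linarith) (by linarith)
    rw [abs_mul, abs_of_pos hp, abs_mul, abs_mul, abs_of_pos (by linarith : 0 < a + 1 / 2 + n)] at h
    have h1 : |a + n| ≤ n + 1 := abs_le.2 ⟨by linarith, by linarith⟩
    have h2 : |a + n| * (a + 1 / 2 + n) ≤ (2 * a + 1 + n) * ((n : ℝ) + 1) := by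
      rw [mul_comm (2 * a + 1 + (n : ℝ))]
      exact mul_le_mul h1 (by linarith) (by linarith) (by linarith)
    have h3 : |coeff a (n + 1)| * ((2 * a + 1 + n) * ((n : ℝ) + 1))
        ≤ 1 * ((2 * a + 1 + n) * ((n : ℝ) + 1)) := by
      rw [h]
      exact mul_le_mul ih h2 (mul_nonneg (abs_nonneg _) (by linarith)) zero_le_one
    exact le_of_mul_le_mul_right h3 hp

lemma coeff_succ_nonpos {a : ℝ} (ha : -(1 / 2) < a) (ha0 : a < 0) (n : ℕ) :
    coeff a (n + 1) ≤ 0 := by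
  induction n with
  | zero =>
    have h := coeff_succ ha 0
    simp only [coeff_zero, Nat.cast_zero, add_zero, zero_add] at h
    by_contra! hc
    nlinarith [mul_pos hc (by linarith : 0 < 2 * a + 1),
      mul_neg_of_neg_of_pos ha0 (by linarith : 0 < a + 1 / 2)]
  | succ n ih =>
    have hn : (0 : ℝ) ≤ n := n.cast_nonneg
    have h := coeff_succ ha (n + 1)
    push_cast at h
    have hp : 0 < (2 * a + 1 + ((n : ℝ) + 1)) * ((n : ℝ) + 1 + 1) :=
      mul_pos (by linarith) (by linarith)
    have hq : 0 ≤ (a + ((n : ℝ) + 1)) * (a + 1 / 2 + ((n : ℝ) + 1)) :=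
      mul_nonneg (by linarith) (by linarith)
    by_contra! hc
    linarith [mul_pos hc hp, mul_nonpos_of_nonpos_of_nonneg ih hq]

/-! ### Termwise differentiation of power series -/

/-- Polynomial growth of the coefficients of a power series. -/
def PolyBdd (e : ℕ → ℝ) : Prop := ∃ (M : ℝ) (k : ℕ), 0 ≤ M ∧ ∀ n, |e n| ≤ M * ((n : ℝ) + 1) ^ k

/-- The coefficients of the formal derivative of `∑ e n * x ^ n`. -/
def dcoeff (e : ℕ → ℝ) (n : ℕ) : ℝ := (n + 1) * e (n + 1)

lemma PolyBdd.dcoeff {e : ℕ → ℝ} (he : PolyBdd e) : PolyBdd (dcoeff e) := by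
  obtain ⟨M, k, hM, h⟩ := he
  refine ⟨M * 2 ^ k, k + 1, by positivity, fun n ↦ ?_⟩
  have hn : (0 : ℝ) ≤ n := n.cast_nonneg
  have h1 := h (n + 1)
  push_cast at h1
  have h2 : ((n : ℝ) + 1 + 1) ^ k ≤ (2 * ((n : ℝ) + 1)) ^ k :=
    pow_le_pow_left₀ (by linarith) (by linarith) k
  rw [_root_.dcoeff, abs_mul, abs_of_pos (by linarith : 0 < (n : ℝ) + 1)]
  calc ((n : ℝ) + 1) * |e (n + 1)| ≤ (n + 1) * (M * (2 * ((n : ℝ) + 1)) ^ k) := by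
        gcongr
        exact h1.trans (mul_le_mul_of_nonneg_left h2 hM)
    _ = M * 2 ^ k * ((n : ℝ) + 1) ^ (k + 1) := by rw [mul_pow]; ring

lemma PolyBdd.summable_abs {e : ℕ → ℝ} (he : PolyBdd e) {r : ℝ} (hr0 : 0 ≤ r) (hr : r < 1) :
    Summable fun n ↦ |e n| * r ^ n := by
  obtain ⟨M, k, hM, h⟩ := he
  have hs : Summable fun n : ℕ ↦ M * 2 ^ k * (((n : ℝ) ^ k + 1) * r ^ n) := by
    refine Summable.mul_left _ ?_
    simp only [add_mul, one_mul]
    exact (summable_pow_mul_geometric_of_norm_lt_one (R := ℝ) k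
      (by rwa [Real.norm_of_nonneg hr0])).add (summable_geometric_of_lt_one hr0 hr)
  refine Summable.of_nonneg_of_le (fun n ↦ by positivity) (fun n ↦ ?_) hs
  have h2 : ((n : ℝ) + 1) ^ k ≤ 2 ^ k * ((n : ℝ) ^ k + 1) := by
    rcases n.eq_zero_or_pos with rfl | hn
    · have : (1 : ℝ) ≤ 2 ^ k := one_le_pow₀ (by norm_num)
      have h0 : (0 : ℝ) ≤ 0 ^ k := by positivity
      simp only [Nat.cast_zero, zero_add, one_pow]
      nlinarith
    · have hn' : (1 : ℝ) ≤ n := by exact_mod_cast hn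
      calc ((n : ℝ) + 1) ^ k ≤ (2 * (n : ℝ)) ^ k := pow_le_pow_left₀ (by linarith) (by linarith) k
        _ = 2 ^ k * (n : ℝ) ^ k := mul_pow _ _ _
        _ ≤ 2 ^ k * ((n : ℝ) ^ k + 1) := by gcongr; linarith
  calc |e n| * r ^ n ≤ M * (2 ^ k * ((n : ℝ) ^ k + 1)) * r ^ n := by
        gcongr
        exact (h n).trans (mul_le_mul_of_nonneg_left h2 hM)
    _ = M * 2 ^ k * (((n : ℝ) ^ k + 1) * r ^ n) := by ring

lemma PolyBdd.summable {e : ℕ → ℝ} (he : PolyBdd e) {x : ℝ} (hx : |x| < 1) :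
    Summable fun n ↦ e n * x ^ n :=
  Summable.of_norm_bounded (he.summable_abs (abs_nonneg x) hx) fun n ↦ by
    rw [Real.norm_eq_abs, abs_mul, abs_pow]

lemma PolyBdd.hasDerivAt {e : ℕ → ℝ} (he : PolyBdd e) {x : ℝ} (hx : |x| < 1) :
    HasDerivAt (fun t ↦ ∑' n, e n * t ^ n) (∑' n, _root_.dcoeff e n * x ^ n) x := by
  obtain ⟨r, hxr, hr⟩ := exists_between hx
  have hr0 : 0 < r := (abs_nonneg x).trans_lt hxr
  have hu : Summable fun n : ℕ ↦ |e n| * (n * r ^ (n - 1)) := by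
    refine (summable_nat_add_iff 1).1 ((he.dcoeff.summable_abs hr0.le hr).congr fun n ↦ ?_)
    rw [_root_.dcoeff, abs_mul, abs_of_nonneg (by positivity : 0 ≤ (n : ℝ) + 1)]
    rw [Nat.add_sub_cancel]
    push_cast
    ring
  have hbound : ∀ (n : ℕ) (y : ℝ), y ∈ Set.Ioo (-r) r →
      ‖e n * (n * y ^ (n - 1))‖ ≤ |e n| * (n * r ^ (n - 1)) := by
    intro n y hy
    rw [Real.norm_eq_abs, abs_mul, abs_mul, abs_pow, Nat.abs_cast]
    have : |y| ≤ r := (abs_lt.2 hy).le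
    gcongr
  have hmem : x ∈ Set.Ioo (-r) r := abs_lt.1 hxr
  have key := hasDerivAt_tsum_of_isPreconnected (g := fun n t ↦ e n * t ^ n)
    (g' := fun n t ↦ e n * (n * t ^ (n - 1))) hu isOpen_Ioo isPreconnected_Ioo
    (fun n y _ ↦ (hasDerivAt_pow n y).const_mul (e n)) hbound hmem (he.summable hx) hmem
  have hs : Summable fun n : ℕ ↦ e n * (n * x ^ (n - 1)) :=
    Summable.of_norm_bounded hu fun n ↦ hbound n x hmem
  rw [hs.tsum_eq_zero_add] at key
  refine key.congr_deriv ?_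
  simp only [Nat.cast_zero, zero_mul, mul_zero, zero_add, Nat.add_sub_cancel]
  refine tsum_congr fun n ↦ ?_
  rw [_root_.dcoeff]
  push_cast
  ring

/-- Multiplying a power series by `x` shifts its coefficients. -/
lemma hasSum_shift {e : ℕ → ℝ} (h0 : e 0 = 0) {x v : ℝ}
    (h : HasSum (fun n ↦ e (n + 1) * x ^ n) v) : HasSum (fun n ↦ e n * x ^ n) (x * v) := by
  rw [← hasSum_nat_add_iff' 1]
  simp only [Finset.range_one, Finset.sum_singleton, h0, zero_mul, sub_zero]
  exact (h.mul_left x).congr_fun fun n ↦ by ring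

/-! ### The hypergeometric equation and the quadratic substitution -/

lemma coeff_polyBdd {a : ℝ} (ha : -(1 / 2) < a) (ha0 : a < 0) : PolyBdd (coeff a) :=
  ⟨1, 0, zero_le_one, fun n ↦ by simpa using coeff_abs_le ha ha0 n⟩

/-- The hypergeometric differential equation for `₂F₁(a, a + 1/2; 2a + 1; x)`. -/
lemma coeff_ode {a : ℝ} (ha : -(1 / 2) < a) (ha0 : a < 0) {x : ℝ} (hx : |x| < 1) :
    x * (1 - x) * (∑' n, dcoeff (dcoeff (coeff a)) n * x ^ n)
      + (2 * a + 1 - (2 * a + 3 / 2) * x) * (∑' n, dcoeff (coeff a) n * x ^ n)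
      - a * (a + 1 / 2) * (∑' n, coeff a n * x ^ n) = 0 := by
  have hb := coeff_polyBdd ha ha0
  have S0 := (hb.summable hx).hasSum
  have S1 := (hb.dcoeff.summable hx).hasSum
  have S2 := (hb.dcoeff.dcoeff.summable hx).hasSum
  -- the series of `x G'`, `x G''` and `x² G''`, reindexed to powers `x ^ n`
  have T1 := hasSum_shift (x := x) (e := fun n ↦ n * coeff a n) (by simp)
    (S1.congr_fun fun n ↦ by simp [dcoeff])
  have T2 := hasSum_shift (x := x) (e := fun n ↦ n * dcoeff (coeff a) n) (by simp)
    (S2.congr_fun fun n ↦ by simp [dcoeff])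
  have T3 := hasSum_shift (x := x) (e := fun n ↦ n * (n - 1) * coeff a n) (by simp)
    (T2.congr_fun fun n ↦ by simp only [dcoeff]; push_cast; ring)
  have key := (((T2.sub T3).add (S1.mul_left (2 * a + 1))).sub
    (T1.mul_left (2 * a + 3 / 2))).sub (S0.mul_left (a * (a + 1 / 2)))
  have h0 := key.unique (hasSum_zero.congr_fun fun n ↦ by
    have h := coeff_succ ha n
    simp only [dcoeff]
    linear_combination x ^ n * h)
  linear_combination h0

/-- A function with vanishing derivative on the interior of a half-open interval is constant. -/
lemma eq_left_of_hasDerivAt_zero {f : ℝ → ℝ} {b : ℝ} (hc : ContinuousOn f (Set.Ico 0 b))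
    (hd : ∀ y ∈ Set.Ioo 0 b, HasDerivAt f 0 y) {y : ℝ} (hy : y ∈ Set.Ico 0 b) : f y = f 0 := by
  rcases hy.1.eq_or_lt with rfl | h0
  · rfl
  obtain ⟨c, -, hc'⟩ := exists_hasDerivAt_eq_slope f (fun _ ↦ 0) h0
    (hc.mono fun t ht ↦ ⟨ht.1, ht.2.trans_lt hy.2⟩) fun t ht ↦ hd t ⟨ht.1, ht.2.trans hy.2⟩
  have := (eq_div_iff (by linarith)).1 hc'
  linarith

/-- The quadratic identity in the variable `y`, where `x = 4y(1 - y)`. -/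
lemma coeff_sum_quadratic {a : ℝ} (ha : -(1 / 2) < a) (ha0 : a < 0) {y : ℝ}
    (hy : y ∈ Set.Ico (0 : ℝ) (1 / 2)) :
    ∑' n, coeff a n * (4 * y * (1 - y)) ^ n = (1 - y) ^ (-(2 * a)) := by
  have hb := coeff_polyBdd ha ha0
  set G : ℝ → ℝ := fun x ↦ ∑' n, coeff a n * x ^ n with hG
  set G₁ : ℝ → ℝ := fun x ↦ ∑' n, dcoeff (coeff a) n * x ^ n with hG₁
  set G₂ : ℝ → ℝ := fun x ↦ ∑' n, dcoeff (dcoeff (coeff a)) n * x ^ n with hG₂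
  have hlt : ∀ t ∈ Set.Ico (0 : ℝ) (1 / 2), |4 * t * (1 - t)| < 1 := fun t ht ↦ by
    rw [abs_of_nonneg (mul_nonneg (by linarith [ht.1]) (by linarith [ht.2]))]
    nlinarith [mul_pos (sub_pos.2 ht.2) (sub_pos.2 ht.2)]
  have hsub : ∀ t : ℝ, HasDerivAt (fun t ↦ 4 * t * (1 - t)) (4 * (1 - 2 * t)) t := fun t ↦ by
    refine (((hasDerivAt_id t).const_mul 4).mul ((hasDerivAt_id t).const_sub 1)).congr_deriv ?_
    simp only [id]
    ring
  have hg : ∀ t ∈ Set.Ico (0 : ℝ) (1 / 2), HasDerivAt (fun t ↦ G (4 * t * (1 - t)))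
      (G₁ (4 * t * (1 - t)) * (4 * (1 - 2 * t))) t := fun t ht ↦
    HasDerivAt.comp (h₂ := G) t (hb.hasDerivAt (hlt t ht)) (hsub t)
  have hg₁ : ∀ t ∈ Set.Ico (0 : ℝ) (1 / 2), HasDerivAt (fun t ↦ G₁ (4 * t * (1 - t)))
      (G₂ (4 * t * (1 - t)) * (4 * (1 - 2 * t))) t := fun t ht ↦
    HasDerivAt.comp (h₂ := G₁) t (hb.dcoeff.hasDerivAt (hlt t ht)) (hsub t)
  -- `h = (1 - y) g' - 2a g` where `g y = G (4 y (1 - y))`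
  set h : ℝ → ℝ := fun t ↦ (1 - t) * (G₁ (4 * t * (1 - t)) * (4 * (1 - 2 * t)))
    - 2 * a * G (4 * t * (1 - t)) with hh
  have hh' : ∀ t ∈ Set.Ico (0 : ℝ) (1 / 2), ∃ d, HasDerivAt h d t ∧
      t * d = -(2 * a + 1) * h t := fun t ht ↦ by
    have hlin : HasDerivAt (fun t : ℝ ↦ 4 * (1 - 2 * t)) (-8) t := by
      refine ((((hasDerivAt_id t).const_mul 2).const_sub 1).const_mul 4).congr_deriv ?_
      norm_num
    refine ⟨_, (((hasDerivAt_id t).const_sub 1).mul ((hg₁ t ht).mul hlin)).sub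
      ((hg t ht).const_mul (2 * a)), ?_⟩
    have ode := coeff_ode ha ha0 (hlt t ht)
    simp only [hh, id, Pi.mul_apply]
    change _ * G₂ (4 * t * (1 - t)) + _ * G₁ (4 * t * (1 - t)) - _ * G (4 * t * (1 - t)) = 0 at ode
    linear_combination 4 * ode
  -- `t ^ (2a + 1) h` has zero derivative and vanishes at `0`
  have hzero : ∀ t ∈ Set.Ioo (0 : ℝ) (1 / 2), h t = 0 := fun t ht ↦ by
    have hconst := eq_left_of_hasDerivAt_zero (f := fun t ↦ t ^ (2 * a + 1) * h t) (b := 1 / 2)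
      (fun u hu ↦ by
        obtain ⟨d, hd, -⟩ := hh' u hu
        exact ((Real.continuousAt_rpow_const u _ (Or.inr (by linarith))).mul
          hd.continuousAt).continuousWithinAt)
      (fun u hu ↦ by
        obtain ⟨d, hd, hd'⟩ := hh' u ⟨hu.1.le, hu.2⟩
        refine ((Real.hasDerivAt_rpow_const (Or.inl hu.1.ne')).mul hd).congr_deriv ?_
        have : u ^ (2 * a + 1) = u ^ (2 * a + 1 - 1) * u := by
          rw [← Real.rpow_add_one hu.1.ne', sub_add_cancel]
        rw [this]
        linear_combination u ^ (2 * a + 1 - 1) * hd') ⟨ht.1.le, ht.2⟩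
    simp only [Real.zero_rpow (by linarith : 2 * a + 1 ≠ 0), zero_mul] at hconst
    exact (mul_eq_zero.1 hconst).resolve_left (Real.rpow_pos_of_pos ht.1 _).ne'
  have hd : ∀ t ∈ Set.Ico (0 : ℝ) (1 / 2), HasDerivAt
      (fun t ↦ G (4 * t * (1 - t)) * (1 - t) ^ (2 * a)) ((1 - t) ^ (2 * a - 1) * h t) t :=
    fun t ht ↦ by
      have h1 : 0 < 1 - t := by linarith [ht.2]
      have hp := ((hasDerivAt_id t).const_sub 1).rpow_const (p := 2 * a) (Or.inl h1.ne')
      refine ((hg t ht).mul hp).congr_deriv ?_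
      have : (1 - t) ^ (2 * a) = (1 - t) ^ (2 * a - 1) * (1 - t) := by
        rw [← Real.rpow_add_one h1.ne', sub_add_cancel]
      simp only [hh, id, this]
      ring
  have hconst := eq_left_of_hasDerivAt_zero
    (f := fun t ↦ G (4 * t * (1 - t)) * (1 - t) ^ (2 * a)) (b := 1 / 2)
    (fun u hu ↦ (hd u hu).continuousAt.continuousWithinAt)
    (fun u hu ↦ (hd u ⟨hu.1.le, hu.2⟩).congr_deriv (by rw [hzero u hu, mul_zero])) hy
  have hG0 : G 0 = 1 := by
    simp only [hG]
    rw [tsum_eq_single 0 fun n hn ↦ by simp [hn]]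
    simp [coeff_zero]
  have h1 : 0 < 1 - y := by linarith [hy.2]
  simp only [mul_zero, sub_zero, Real.one_rpow, hG0, mul_one] at hconst
  rw [Real.rpow_neg h1.le]
  exact eq_inv_of_mul_eq_one_left hconst

/-! ### Return to the variable `z` and the endpoint `z = 0` -/

lemma coeff_sum_of_pos {a : ℝ} (ha : -(1 / 2) < a) (ha0 : a < 0) {z : ℝ} (hz : 0 < z)
    (hz1 : z ≤ 1) : ∑' n, coeff a n * (1 - z) ^ n = ((1 + √z) / 2) ^ (-(2 * a)) := by
  have hs : 0 < √z := Real.sqrt_pos.2 hz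
  have hs1 : √z ≤ 1 := Real.sqrt_le_one.2 hz1
  have h := coeff_sum_quadratic ha ha0 (y := (1 - √z) / 2) ⟨by linarith, by linarith⟩
  have e1 : 4 * ((1 - √z) / 2) * (1 - (1 - √z) / 2) = 1 - z := by
    linear_combination -Real.sq_sqrt hz.le
  have e2 : 1 - (1 - √z) / 2 = (1 + √z) / 2 := by ring
  rwa [e1, e2] at h

/-- Convergence at the endpoint `x = 1`: as the coefficients after the first are nonpositive and the
sum is nonnegative on `[0, 1)`, their absolute values add up to at most `1`. -/
lemma coeff_summable {a : ℝ} (ha : -(1 / 2) < a) (ha0 : a < 0) : Summable fun n ↦ |coeff a n| := by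
  refine (summable_nat_add_iff 1).1 ?_
  refine summable_of_sum_range_le (c := 1) (fun n ↦ abs_nonneg _) fun N ↦ ?_
  have hlim : Filter.Tendsto (fun z : ℝ ↦ ∑ n ∈ Finset.range N, |coeff a (n + 1)| * (1 - z) ^ (n + 1))
      (nhdsWithin 0 (Set.Ioi 0)) (nhds (∑ n ∈ Finset.range N, |coeff a (n + 1)|)) := by
    have hc : Continuous
        fun z : ℝ ↦ ∑ n ∈ Finset.range N, |coeff a (n + 1)| * (1 - z) ^ (n + 1) := by fun_prop
    have := (hc.tendsto 0).mono_left (nhdsWithin_le_nhds (s := Set.Ioi 0))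
    simpa using this
  refine le_of_tendsto hlim ?_
  filter_upwards [Ioo_mem_nhdsGT (zero_lt_one' ℝ)] with z hz
  have hx : |1 - z| < 1 := abs_lt.2 ⟨by linarith [hz.2], by linarith [hz.1]⟩
  have hx0 : 0 ≤ 1 - z := by linarith [hz.2]
  have hs := (coeff_polyBdd ha ha0).summable hx
  have heq := hs.tsum_eq_zero_add
  rw [coeff_sum_of_pos ha ha0 hz.1 hz.2.le, coeff_zero, pow_zero, mul_one] at heq
  have hpos : 0 ≤ ((1 + √z) / 2) ^ (-(2 * a)) := by positivity
  have hle := ((summable_nat_add_iff 1).2 hs).neg.sum_le_tsum (Finset.range N) fun n _ ↦ by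
    have := mul_nonneg (neg_nonneg.2 (coeff_succ_nonpos ha ha0 n)) (pow_nonneg hx0 (n + 1))
    linarith
  rw [tsum_neg] at hle
  calc _ = ∑ n ∈ Finset.range N, -(coeff a (n + 1) * (1 - z) ^ (n + 1)) :=
        Finset.sum_congr rfl fun n _ ↦ by
          rw [abs_of_nonpos (coeff_succ_nonpos ha ha0 n), neg_mul]
    _ ≤ 1 := by linarith

lemma coeff_sum {a : ℝ} (ha : -(1 / 2) < a) (ha0 : a < 0) {z : ℝ} (hz : 0 ≤ z)
    (hz1 : z ≤ 1) : ∑' n, coeff a n * (1 - z) ^ n = ((1 + √z) / 2) ^ (-(2 * a)) := by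
  have hEq : Set.EqOn (fun z : ℝ ↦ ∑' n, coeff a n * (1 - z) ^ n)
      (fun z ↦ ((1 + √z) / 2) ^ (-(2 * a))) (Set.Ioc 0 1) :=
    fun z hz ↦ coeff_sum_of_pos ha ha0 hz.1 hz.2
  refine hEq.of_subset_closure (t := Set.Icc 0 1) ?_ ?_ Set.Ioc_subset_Icc_self
    (closure_Ioc (zero_ne_one' ℝ)).ge ⟨hz, hz1⟩
  · refine continuousOn_tsum (fun n ↦ by fun_prop) (coeff_summable ha ha0) fun n z hz ↦ ?_
    rw [Real.norm_eq_abs, abs_mul, abs_pow]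
    refine mul_le_of_le_one_right (abs_nonneg _) (pow_le_one₀ (abs_nonneg _) ?_)
    exact abs_le.2 ⟨by linarith [hz.2], by linarith [hz.1]⟩
  · refine Continuous.continuousOn (Continuous.rpow_const (by fun_prop) fun z ↦ Or.inr ?_)
    linarith

theorem stmt15 (m : ℕ) (hm : 2 ≤ m) (z : ℝ) (hz0 : 0 ≤ z) (hz1 : z < 1) :
    hyp2F1 (-(1 / (2 * m))) (1 / 2 - 1 / (2 * m)) (1 - 1 / m) (1 - z)
      = ((1 + Real.sqrt z) / 2) ^ ((1 : ℝ) / m) := by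
  have hm' : (2 : ℝ) ≤ m := by exact_mod_cast hm
  have hm0 : (0 : ℝ) < m := by linarith
  have ha0 : -(1 / (2 * (m : ℝ))) < 0 := neg_neg_of_pos (by positivity)
  have ha : -(1 / 2) < -(1 / (2 * (m : ℝ))) :=
    neg_lt_neg (one_div_lt_one_div_of_lt (by norm_num) (by linarith))
  have h := coeff_sum ha ha0 hz0 hz1.le
  have e1 : -(1 / (2 * (m : ℝ))) + 1 / 2 = 1 / 2 - 1 / (2 * m) := by ring
  have e2 : 2 * -(1 / (2 * (m : ℝ))) + 1 = 1 - 1 / m := by field_simp; ring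
  have e3 : -(2 * -(1 / (2 * (m : ℝ)))) = 1 / m := by field_simp
  simp only [coeff, e1, e2, e3] at h
  exact h
end

section
/- Let m ≥ 2 be an integer. For 0 < z < 1, (1-z)^{1/m} · ₂F₁(1/(2m), 1/2 + 1/(2m); 1 + 1/m; 1-z) = (2 - 2√z)^{1/m}. -/
/-! ### Power series with bounded coefficients -/

/-- The sum of the real power series with coefficients `c`. -/
noncomputable def psum (c : ℕ → ℝ) (x : ℝ) : ℝ := ∑' n : ℕ, c n * x ^ n

lemma psum_zero (c : ℕ → ℝ) : psum c 0 = c 0 := by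
  unfold psum
  rw [tsum_eq_single 0]
  · simp
  · intro n hn
    simp [hn]

lemma psum_summable {c : ℕ → ℝ} (hc : ∀ n, |c n| ≤ 1) {x : ℝ} (hx : |x| < 1) :
    Summable fun n => c n * x ^ n := by
  refine Summable.of_norm_bounded (summable_geometric_of_lt_one (abs_nonneg x) hx) fun n => ?_
  rw [norm_mul, norm_pow, Real.norm_eq_abs, Real.norm_eq_abs]
  exact mul_le_of_le_one_left (by positivity) (hc n)

/-- The terms `n * c n * x ^ n` are those of `x * (psum c)' x`. -/
lemma psum_deriv_summable {c : ℕ → ℝ} (hc : ∀ n, |c n| ≤ 1) {x : ℝ} (hx : |x| < 1) :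
    Summable fun n : ℕ => n * c n * x ^ n := by
  have h := summable_pow_mul_geometric_of_norm_lt_one 1 (r := |x|) (by simpa using hx)
  refine Summable.of_norm_bounded h fun n => ?_
  rw [norm_mul, norm_mul, norm_pow, Real.norm_eq_abs, Real.norm_eq_abs, Real.norm_eq_abs,
    Nat.abs_cast, pow_one]
  exact mul_le_mul_of_nonneg_right (mul_le_of_le_one_right (by positivity) (hc n)) (by positivity)

lemma psum_hasDerivAt {c : ℕ → ℝ} (hc : ∀ n, |c n| ≤ 1) {x : ℝ} (hx : |x| < 1) :
    HasDerivAt (psum c) (∑' n : ℕ, c n * (n * x ^ (n - 1))) x := by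
  obtain ⟨r, hxr, hr1⟩ := exists_between hx
  have hr0 : 0 < r := (abs_nonneg x).trans_lt hxr
  have hu : Summable fun n : ℕ => (n : ℝ) * r ^ (n - 1) := by
    have h := summable_pow_mul_geometric_of_norm_lt_one 1 (r := r)
      (by rwa [Real.norm_eq_abs, abs_of_pos hr0])
    refine (h.mul_left r⁻¹).congr fun n => ?_
    rcases n with _ | n
    · simp
    · rw [Nat.add_sub_cancel, pow_one, pow_succ]
      field_simp
  refine hasDerivAt_tsum_of_isPreconnected (t := Metric.ball 0 r) (y₀ := 0) hu
    Metric.isOpen_ball (convex_ball 0 r).isPreconnected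
    (fun n y _ => (hasDerivAt_pow n y).const_mul (c n)) (fun n y hy => ?_)
    (Metric.mem_ball_self hr0) (psum_summable hc (by simp)) (by simpa using hxr)
  have hy' : |y| ≤ r := by simpa using (Metric.mem_ball.1 hy).le
  rw [norm_mul, norm_mul, norm_pow, Real.norm_eq_abs, Real.norm_eq_abs, Real.norm_eq_abs,
    Nat.abs_cast]
  refine (mul_le_of_le_one_left (by positivity) (hc n)).trans ?_
  gcongr

lemma mul_psum_deriv {c : ℕ → ℝ} (x : ℝ) :
    x * (∑' n : ℕ, c n * (n * x ^ (n - 1))) = ∑' n : ℕ, n * c n * x ^ n := by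
  rw [← tsum_mul_left]
  congr 1
  ext n
  rcases n with _ | n
  · simp
  · rw [Nat.add_sub_cancel, pow_succ]
    ring

/-! ### Hypergeometric coefficients -/

/-- Coefficients of `₂F₁(A, B; C; ·)`. -/
noncomputable def hypCoeff (A B C : ℝ) (p : ℕ) : ℝ :=
  (ascPochhammer ℝ p).eval A * (ascPochhammer ℝ p).eval B
    / ((ascPochhammer ℝ p).eval C * (Nat.factorial p))

lemma hypCoeff_zero (A B C : ℝ) : hypCoeff A B C 0 = 1 := by
  simp [hypCoeff]

lemma hypCoeff_succ (A B C : ℝ) (n : ℕ) :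
    hypCoeff A B C (n + 1) = hypCoeff A B C n * ((A + n) * (B + n) / ((C + n) * (n + 1))) := by
  simp only [hypCoeff, ascPochhammer_succ_eval, Nat.factorial_succ]
  push_cast
  rw [div_mul_div_comm]
  congr 1 <;> ring

lemma hypCoeff_pos {A B C : ℝ} (hA : 0 < A) (hB : 0 < B) (hC : 0 < C) (n : ℕ) :
    0 < hypCoeff A B C n := by
  have := ascPochhammer_pos n A hA
  have := ascPochhammer_pos n B hB
  have := ascPochhammer_pos n C hC
  unfold hypCoeff
  positivity

/-- If `A + B ≤ C + 1` and `A * B ≤ C`, consecutive coefficients have ratio at most one. -/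
lemma hypCoeff_abs_le {A B C : ℝ} (hA : 0 < A) (hB : 0 < B) (hC : 0 < C)
    (h1 : A + B ≤ C + 1) (h2 : A * B ≤ C) (n : ℕ) : |hypCoeff A B C n| ≤ 1 := by
  rw [abs_of_pos (hypCoeff_pos hA hB hC n)]
  induction n with
  | zero => rw [hypCoeff_zero]
  | succ n ih =>
    rw [hypCoeff_succ]
    refine mul_le_one₀ ih (by positivity) ?_
    rw [div_le_one (by positivity)]
    have : (n : ℝ) * (A + B) ≤ n * (C + 1) := by gcongr
    nlinarith

/-- Contiguity in the first parameter: `a (d_n - c_n) = n c_n`, where `c` and `d` are the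
coefficients with first parameter `a` and `a + 1`. -/
lemma hypCoeff_contig {a B C : ℝ} (ha : 0 < a) (n : ℕ) :
    a * hypCoeff (a + 1) B C n = (a + n) * hypCoeff a B C n := by
  induction n with
  | zero => simp [hypCoeff_zero]
  | succ n ih =>
    rw [hypCoeff_succ, hypCoeff_succ, ← mul_assoc, ih]
    push_cast
    have : a + n ≠ 0 := by positivity
    ring

/-! ### The closed form -/

section ClosedForm

variable {a : ℝ}

lemma coeff_f_le (ha : 0 < a) (ha' : a ≤ 1 / 4) (n : ℕ) :
    |hypCoeff a (1 / 2 + a) (1 + 2 * a) n| ≤ 1 :=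
  hypCoeff_abs_le ha (by linarith) (by linarith) (by linarith) (by nlinarith) n

lemma coeff_g_le (ha : 0 < a) (ha' : a ≤ 1 / 4) (n : ℕ) :
    |hypCoeff (a + 1) (1 / 2 + a) (1 + 2 * a) n| ≤ 1 :=
  hypCoeff_abs_le (by linarith) (by linarith) (by linarith) (by linarith) (by nlinarith) n

/-- `x f' = a (g - f)` for `f = ₂F₁(a, a + 1/2; 1 + 2a; x)` and
`g = ₂F₁(a + 1, a + 1/2; 1 + 2a; x)`. -/
lemma theta_f (ha : 0 < a) (ha' : a ≤ 1 / 4) {x : ℝ} (hx : |x| < 1) :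
    ∑' n : ℕ, n * hypCoeff a (1 / 2 + a) (1 + 2 * a) n * x ^ n =
      a * (psum (hypCoeff (a + 1) (1 / 2 + a) (1 + 2 * a)) x
        - psum (hypCoeff a (1 / 2 + a) (1 + 2 * a)) x) := by
  unfold psum
  rw [← (psum_summable (coeff_g_le ha ha') hx).tsum_sub (psum_summable (coeff_f_le ha ha') hx),
    ← tsum_mul_left]
  congr 1
  ext n
  linear_combination (-x ^ n) * hypCoeff_contig (B := 1 / 2 + a) (C := 1 + 2 * a) ha n

/-- `(1 - x) x g' = a (f - g) + (a + 1/2) x g`, with `f` and `g` as in `theta_f`. -/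
lemma theta_g (ha : 0 < a) (ha' : a ≤ 1 / 4) {x : ℝ} (hx : |x| < 1) :
    (1 - x) * ∑' n : ℕ, n * hypCoeff (a + 1) (1 / 2 + a) (1 + 2 * a) n * x ^ n =
      a * (psum (hypCoeff a (1 / 2 + a) (1 + 2 * a)) x
        - psum (hypCoeff (a + 1) (1 / 2 + a) (1 + 2 * a)) x)
      + (a + 1 / 2) * x * psum (hypCoeff (a + 1) (1 / 2 + a) (1 + 2 * a)) x := by
  have hg := psum_summable (coeff_g_le ha ha') hx
  have hf := psum_summable (coeff_f_le ha ha') hx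
  have hg' := psum_deriv_summable (coeff_g_le ha ha') hx
  set c := hypCoeff a (1 / 2 + a) (1 + 2 * a) with hc
  set d := hypCoeff (a + 1) (1 / 2 + a) (1 + 2 * a) with hd
  -- comparison of the coefficients of `x ^ (n + 1)`
  have key : ∀ n : ℕ, ((n + 1 : ℕ) : ℝ) * d (n + 1) * x ^ (n + 1)
      = x * (n * d n * x ^ n) + a * (c (n + 1) * x ^ (n + 1) - d (n + 1) * x ^ (n + 1))
        + (a + 1 / 2) * x * (d n * x ^ n) := by
    intro n
    have e1 := hypCoeff_contig (B := 1 / 2 + a) (C := 1 + 2 * a) ha n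
    have e2 := hypCoeff_contig (B := 1 / 2 + a) (C := 1 + 2 * a) ha (n + 1)
    have e3 : c (n + 1) * ((1 + 2 * a + n) * (n + 1)) = c n * ((a + n) * (1 / 2 + a + n)) := by
      rw [hc, hypCoeff_succ]
      have : (1 + 2 * a + n) ≠ 0 := by positivity
      have : (n : ℝ) + 1 ≠ 0 := by positivity
      field_simp
    rw [← hc, ← hd] at e1 e2
    push_cast at e2 ⊢
    have e4 : (n + 1 + a) * d (n + 1) = (n + a + 1 / 2) * d n + a * c (n + 1) := by
      refine mul_left_cancel₀ ha.ne' ?_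
      linear_combination (n + 1 + a) * e2 + e3 - (n + a + 1 / 2) * e1
    rw [pow_succ]
    linear_combination (x ^ n * x) * e4
  have hf1 := (summable_nat_add_iff 1).2 hf
  have hg1 := (summable_nat_add_iff 1).2 hg
  have S := hg'.tsum_eq_zero_add
  rw [tsum_congr key, ((hg'.mul_left x).add ((hf1.sub hg1).mul_left a)).tsum_add
    (hg.mul_left _), (hg'.mul_left x).tsum_add ((hf1.sub hg1).mul_left a), tsum_mul_left,
    tsum_mul_left, tsum_mul_left, hf1.tsum_sub hg1] at S
  have Sf := hf.tsum_eq_zero_add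
  have Sg := hg.tsum_eq_zero_add
  have c0 : c 0 = 1 := hypCoeff_zero _ _ _
  have d0 : d 0 = 1 := hypCoeff_zero _ _ _
  simp only [Nat.cast_zero, zero_add, pow_zero, c0, d0, mul_one] at S Sf Sg
  unfold psum
  linear_combination S - a * Sf + a * Sg

/-- A function continuous on `[0, y]` with vanishing derivative inside takes the same value at
both ends. -/
lemma eq_value_at_zero {F : ℝ → ℝ} {y : ℝ} (hy : 0 < y) (hc : ContinuousOn F (Set.Icc 0 y))
    (hd : ∀ x ∈ Set.Ioo 0 y, HasDerivAt F 0 x) : F y = F 0 := by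
  obtain ⟨t, ht, h⟩ := exists_hasDerivAt_eq_slope F (fun _ => 0) hy hc hd
  rcases div_eq_zero_iff.1 h.symm with h | h <;> linarith

/-- `f ^ 2 = (1 - x) g ^ 2`, with `f` and `g` as in `theta_f`: the difference `D` of the two
sides satisfies `x D' = -2 a D`, so `x ^ (2 a) * D` is constant, and it vanishes at `0`. -/
lemma sq_relation (ha : 0 < a) (ha' : a ≤ 1 / 4) {y : ℝ} (hy0 : 0 < y) (hy1 : y < 1) :
    psum (hypCoeff a (1 / 2 + a) (1 + 2 * a)) y ^ 2 =
      (1 - y) * psum (hypCoeff (a + 1) (1 / 2 + a) (1 + 2 * a)) y ^ 2 := by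
  have hf := fun {x} => psum_hasDerivAt (x := x) (coeff_f_le ha ha')
  have hg := fun {x} => psum_hasDerivAt (x := x) (coeff_g_le ha ha')
  have tf := fun {x} => theta_f (x := x) ha ha'
  have tg := fun {x} => theta_g (x := x) ha ha'
  simp only [← mul_psum_deriv] at tf tg
  set f := psum (hypCoeff a (1 / 2 + a) (1 + 2 * a))
  set g := psum (hypCoeff (a + 1) (1 / 2 + a) (1 + 2 * a))
  have habs : ∀ x ∈ Set.Icc 0 y, |x| < 1 := fun x hx => by
    rw [abs_of_nonneg hx.1]
    exact hx.2.trans_lt hy1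
  have hD : ∀ {x}, |x| < 1 → HasDerivAt (fun x => f x ^ 2 - (1 - x) * g x ^ 2) _ x :=
    fun {x} hx => ((hf hx).pow 2).sub (((hasDerivAt_id x).const_sub 1).mul ((hg hx).pow 2))
  have h := eq_value_at_zero (F := fun x => x ^ (2 * a) * (f x ^ 2 - (1 - x) * g x ^ 2)) hy0 ?_ ?_
  · rw [Real.zero_rpow (by positivity), zero_mul] at h
    have hp : y ^ (2 * a) ≠ 0 := (Real.rpow_pos_of_pos hy0 _).ne'
    linarith [(mul_eq_zero.1 h).resolve_left hp]
  · exact (continuousOn_id.rpow_const fun x _ => Or.inr (by positivity)).mul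
      fun x hx => (hD (habs x hx)).continuousAt.continuousWithinAt
  · intro x hx
    have hx' := habs x ⟨hx.1.le, hx.2.le⟩
    have h0 : x ≠ 0 := hx.1.ne'
    refine ((Real.hasDerivAt_rpow_const (p := 2 * a) (Or.inl h0)).mul (hD hx')).congr_deriv ?_
    have tf := tf hx'
    have tg := tg hx'
    rw [Real.rpow_sub_one h0]
    simp only [id, Nat.cast_ofNat, Nat.add_one_sub_one, pow_one]
    generalize (∑' n : ℕ, hypCoeff a (1 / 2 + a) (1 + 2 * a) n * (n * x ^ (n - 1))) = f' at *
    generalize (∑' n : ℕ, hypCoeff (a + 1) (1 / 2 + a) (1 + 2 * a) n * (n * x ^ (n - 1))) = g' at *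
    refine mul_left_cancel₀ h0 ?_
    field_simp
    linear_combination x ^ (2 * a) * (2 * f x * tf - 2 * g x * tg)

lemma psum_pos {c : ℕ → ℝ} (hc : ∀ n, |c n| ≤ 1) (hp : ∀ n, 0 < c n) {x : ℝ} (hx0 : 0 ≤ x)
    (hx : x < 1) : 0 < psum c x :=
  (psum_summable hc (by rwa [abs_of_nonneg hx0])).tsum_pos
    (fun n => mul_nonneg (hp n).le (pow_nonneg hx0 n)) 0 (by simpa using hp 0)

/-- `₂F₁(a, a + 1/2; 1 + 2a; x) * ((1 + √(1 - x)) / 2) ^ (2a) = 1`. -/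
lemma closed_form (ha : 0 < a) (ha' : a ≤ 1 / 4) {y : ℝ} (hy0 : 0 < y) (hy1 : y < 1) :
    psum (hypCoeff a (1 / 2 + a) (1 + 2 * a)) y * ((1 + √(1 - y)) / 2) ^ (2 * a) = 1 := by
  have hf := fun {x} => psum_hasDerivAt (x := x) (coeff_f_le ha ha')
  have tf := fun {x} => theta_f (x := x) ha ha'
  have sq := fun {x} => sq_relation (y := x) ha ha'
  have f0 := psum_zero (hypCoeff a (1 / 2 + a) (1 + 2 * a))
  have fpos := fun {x} => psum_pos (x := x) (coeff_f_le ha ha')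
    (hypCoeff_pos ha (by positivity) (by positivity))
  have gpos := fun {x} => psum_pos (x := x) (coeff_g_le ha ha')
    (hypCoeff_pos (by positivity) (by positivity) (by positivity))
  rw [hypCoeff_zero] at f0
  simp only [← mul_psum_deriv] at tf
  set f := psum (hypCoeff a (1 / 2 + a) (1 + 2 * a))
  set g := psum (hypCoeff (a + 1) (1 / 2 + a) (1 + 2 * a))
  have habs : ∀ x ∈ Set.Icc 0 y, |x| < 1 := fun x hx => by
    rw [abs_of_nonneg hx.1]
    exact hx.2.trans_lt hy1
  have h := eq_value_at_zero (F := fun x => f x * ((1 + √(1 - x)) / 2) ^ (2 * a)) hy0 ?_ ?_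
  · simpa [f0] using h
  · refine ContinuousOn.mul
      (fun x hx => (hf (habs x hx)).continuousAt.continuousWithinAt) ?_
    exact ContinuousOn.rpow_const (by fun_prop) fun x _ => Or.inl (by positivity)
  · intro x hx
    have hx0 : 0 < x := hx.1
    have hx1 : x < 1 := hx.2.trans hy1
    have tf := tf (habs x ⟨hx.1.le, hx.2.le⟩)
    have hs2 : √(1 - x) ^ 2 = 1 - x := Real.sq_sqrt (by linarith)
    have hs : 0 < √(1 - x) := Real.sqrt_pos.2 (by linarith)
    have hfg : f x = √(1 - x) * g x := by
      have := sq hx0 hx1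
      rw [← hs2, ← mul_pow] at this
      exact (pow_left_inj₀ (fpos hx0.le hx1).le
        (mul_pos hs (gpos hx0.le hx1)).le two_ne_zero).1 this
    have hS := (((((hasDerivAt_id x).const_sub 1).sqrt
      (by simp only [id]; linarith)).const_add 1).div_const 2).rpow_const (p := 2 * a)
      (Or.inl (by positivity))
    refine ((hf (habs x ⟨hx.1.le, hx.2.le⟩)).mul hS).congr_deriv ?_
    simp only [id]
    set s := √(1 - x)
    set f' := ∑' n : ℕ, hypCoeff a (1 / 2 + a) (1 + 2 * a) n * (n * x ^ (n - 1))
    -- since `x = (1 - s) (1 + s)`, the equation for `x f'` becomes `f' (1 + s) = a g`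
    have hf' : f' * (1 + s) = a * g x := by
      have hs1 : 1 - s ≠ 0 := fun h => by
        have : s = 1 := by linarith
        rw [this] at hs2
        linarith
      refine mul_left_cancel₀ hs1 ?_
      linear_combination tf - f' * hs2 - a * hfg
    rw [Real.rpow_sub_one (by positivity), hfg]
    field_simp
    linear_combination ((1 + s) / 2) ^ (2 * a) * hf'

end ClosedForm

theorem stmt16 (m : ℕ) (hm : 2 ≤ m) (z : ℝ) (hz0 : 0 < z) (hz1 : z < 1) :
    (1 - z) ^ ((1 : ℝ) / m) *
        hyp2F1 (1 / (2 * m)) (1 / 2 + 1 / (2 * m)) (1 + 1 / m) (1 - z)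
      = (2 - 2 * Real.sqrt z) ^ ((1 : ℝ) / m) := by
  have hm' : (2 : ℝ) ≤ m := by exact_mod_cast hm
  have h2 : (1 : ℝ) / m = 2 * (1 / (2 * m)) := by field_simp
  have ha' : (1 : ℝ) / (2 * m) ≤ 1 / 4 := one_div_le_one_div_of_le (by norm_num) (by linarith)
  have ha : (0 : ℝ) < 1 / (2 * m) := by positivity
  rw [h2]
  generalize (1 : ℝ) / (2 * m) = a at *
  have H := closed_form ha ha' (y := 1 - z) (by linarith) (by linarith)
  rw [sub_sub_cancel] at H
  have hs2 : √z ^ 2 = z := Real.sq_sqrt hz0.le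
  have hs : √z < 1 := by
    rw [Real.sqrt_lt' one_pos]
    linarith
  have hs0 := Real.sqrt_nonneg z
  have e : 1 - z = (2 - 2 * √z) * ((1 + √z) / 2) := by linear_combination hs2
  change _ * psum (hypCoeff a (1 / 2 + a) (1 + 2 * a)) (1 - z) = _
  nth_rewrite 1 [e]
  rw [Real.mul_rpow (by linarith) (by positivity)]
  linear_combination (2 - 2 * √z) ^ (2 * a) * H
end
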